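/- arXiv:1510.03044 — 2 statements merged into one kernel-verified Lean document; each statement's English description precedes it below -/
import Mathlib

section
/- Let n ≥ 2. Let Y_c and L be real symmetric n×n weighted graph Laplacians (nonpositive off-diagonal entries, zero row sums), each of rank n−1 (connected), let Y_s be diagonal with nonnegative entries, Y_s ≠ 0, and Y = Y_s + Y_c (so Y is positive definite); assume Y⁻¹ is entrywise nonnegative. Let Υ = diag(I_1^max,…,I_n^max) with I_i^max > 0 and R diagonal with strictly positive entries. Suppose there exist positive scalars τ, r̄, β and ν₂ such that D = τ·E, Ψ = β·E, Φ = r̄·β·E, the symmetric matrix (Y⁻¹Υ + ΥY⁻¹)/2 + RΥ − ν₂·β·L is positive semidefinite, and there exists θ ≥ 0 admissible for Y⁻¹Υ with (ν₂ + r̄)·θ² + ν₂ + r̄ > τ. Then the closed-loop matrix A_c is semistable. -/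
open Matrix Filter Topology

/-- A real square matrix `A` is semistable if `exp(tA)x₀` converges as `t → ∞` for every
initial vector `x₀`. -/
def IsSemistable {N : Type*} [Fintype N] [DecidableEq N]
    (A : Matrix N N ℝ) : Prop :=
  ∀ x₀ : N → ℝ, ∃ y : N → ℝ,
    Tendsto (fun t : ℝ => NormedSpace.exp (t • A) *ᵥ x₀) atTop (𝓝 y)

/-- `θ ≥ 0` is admissible for a real square matrix `M` (with symmetric part `M_s` and
skew-symmetric part `M_k`) if both block matrices `[[M_s, ±θM_k],[±θM_kᵀ, M_s]]` are
positive semidefinite. -/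
def IsAdmissible {n : ℕ} (θ : ℝ) (M : Matrix (Fin n) (Fin n) ℝ) : Prop :=
  0 ≤ θ ∧
  (Matrix.fromBlocks ((1 / 2 : ℝ) • (M + Mᵀ)) (θ • ((1 / 2 : ℝ) • (M - Mᵀ)))
      (θ • ((1 / 2 : ℝ) • (M - Mᵀ))ᵀ) ((1 / 2 : ℝ) • (M + Mᵀ))).PosSemidef ∧
  (Matrix.fromBlocks ((1 / 2 : ℝ) • (M + Mᵀ)) ((-θ) • ((1 / 2 : ℝ) • (M - Mᵀ)))
      ((-θ) • ((1 / 2 : ℝ) • (M - Mᵀ))ᵀ) ((1 / 2 : ℝ) • (M + Mᵀ))).PosSemidef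

/-
Measure the currents in units of the maximal currents: with `x = Υu` the closed loop becomes
`τ M u' + (M + S) u = y`, `y' + r P u' = -P u`, where `M = Y⁻¹Υ`, `S = RΥ` and `P = βL`. Pairing
the equations for an eigenvector of eigenvalue `z` with its component `u` gives
`z ((1 + τ z) m + s) + (1 + r z) p = 0`, in which `s > 0`, `p ≥ 0` and `m` are the values at `u` of
the forms of `S`, `P` and `M`. Admissibility of `θ` confines `m` to the sector `θ |Im m| ≤ Re m`,
and the semidefiniteness condition reads `ν p ≤ Re m + s`. Multiplying by the conjugate of `z` and
taking real and imaginary parts, a root `z ≠ 0` with `Re z ≥ 0` would satisfy, for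
`q = Im z * Im m > 0`, both `(1 + θ²) q ≤ p` and `(ν + r) p ≤ τ q`, against
`τ < (ν + r) (1 + θ²)`. So every nonzero eigenvalue has negative real part; the eigenvalue zero is
semisimple by the same pairing, and decomposing the initial vector into generalized eigenvectors
gives convergence.
-/

section Complexification

variable {m : Type*} [Fintype m]

theorem re_map_ofReal_mulVec (M : Matrix m m ℝ) (u : m → ℂ) (i : m) :
    ((M.map ((↑) : ℝ → ℂ) *ᵥ u) i).re = (M *ᵥ fun j => (u j).re) i := by
  simp [mulVec, dotProduct]

theorem im_map_ofReal_mulVec (M : Matrix m m ℝ) (u : m → ℂ) (i : m) :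
    ((M.map ((↑) : ℝ → ℂ) *ᵥ u) i).im = (M *ᵥ fun j => (u j).im) i := by
  simp [mulVec, dotProduct]

theorem re_star_dotProduct_map_ofReal_mulVec (M : Matrix m m ℝ) (u : m → ℂ) :
    (star u ⬝ᵥ M.map ((↑) : ℝ → ℂ) *ᵥ u).re =
      (fun i => (u i).re) ⬝ᵥ M *ᵥ (fun i => (u i).re) +
        (fun i => (u i).im) ⬝ᵥ M *ᵥ (fun i => (u i).im) := by
  simp [dotProduct, mulVec, Finset.sum_add_distrib]

theorem im_star_dotProduct_map_ofReal_mulVec (M : Matrix m m ℝ) (u : m → ℂ) :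
    (star u ⬝ᵥ M.map ((↑) : ℝ → ℂ) *ᵥ u).im =
      (fun i => (u i).re) ⬝ᵥ M *ᵥ (fun i => (u i).im) -
        (fun i => (u i).im) ⬝ᵥ M *ᵥ (fun i => (u i).re) := by
  simp [dotProduct, mulVec, Finset.sum_add_distrib, sub_eq_add_neg]

theorem dotProduct_add_transpose_mulVec {R : Type*} [CommRing R] (M : Matrix m m R) (x : m → R) :
    x ⬝ᵥ (M + Mᵀ) *ᵥ x = 2 * (x ⬝ᵥ M *ᵥ x) := by
  rw [add_mulVec, dotProduct_add, dotProduct_transpose_mulVec, two_mul]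

theorem im_star_dotProduct_map_ofReal_mulVec_eq_zero {M : Matrix m m ℝ} (hM : M.IsSymm)
    (u : m → ℂ) : (star u ⬝ᵥ M.map ((↑) : ℝ → ℂ) *ᵥ u).im = 0 := by
  rw [im_star_dotProduct_map_ofReal_mulVec, ← dotProduct_transpose_mulVec, hM.eq, sub_self]

open scoped ComplexOrder in
theorem posSemidef_map_ofReal {m : Type*} [Finite m] {M : Matrix m m ℝ} (hM : M.PosSemidef) :
    (M.map ((↑) : ℝ → ℂ)).PosSemidef := by
  cases nonempty_fintype m
  have hsymm : M.IsSymm := isHermitian_iff_isSymm.mp hM.isHermitian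
  refine .of_dotProduct_mulVec_nonneg (hM.isHermitian.map _ fun x => by simp) fun u => ?_
  rw [Complex.nonneg_iff, re_star_dotProduct_map_ofReal_mulVec,
    im_star_dotProduct_map_ofReal_mulVec_eq_zero hsymm]
  exact ⟨add_nonneg (hM.dotProduct_mulVec_nonneg _) (hM.dotProduct_mulVec_nonneg _), rfl⟩

open scoped ComplexOrder in
theorem posDef_map_ofReal {m : Type*} [Finite m] {M : Matrix m m ℝ} (hM : M.PosDef) :
    (M.map ((↑) : ℝ → ℂ)).PosDef := by
  cases nonempty_fintype m
  have hsymm : M.IsSymm := isHermitian_iff_isSymm.mp hM.isHermitian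
  refine .of_dotProduct_mulVec_pos (hM.isHermitian.map _ fun x => by simp) fun u hu => ?_
  have hre_or_im : (fun i => (u i).re) ≠ 0 ∨ (fun i => (u i).im) ≠ 0 := by
    by_contra! h
    exact hu (funext fun i => Complex.ext (congrFun h.1 i) (congrFun h.2 i))
  rw [Complex.pos_iff, re_star_dotProduct_map_ofReal_mulVec,
    im_star_dotProduct_map_ofReal_mulVec_eq_zero hsymm]
  refine ⟨?_, rfl⟩
  rcases hre_or_im with h | h
  · exact add_pos_of_pos_of_nonneg (hM.dotProduct_mulVec_pos h)
      (hM.posSemidef.dotProduct_mulVec_nonneg _)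
  · exact add_pos_of_nonneg_of_pos (hM.posSemidef.dotProduct_mulVec_nonneg _)
      (hM.dotProduct_mulVec_pos h)

theorem mul_sub_le_of_posSemidef_fromBlocks {M : Matrix m m ℝ} {θ : ℝ}
    (h : (fromBlocks ((1 / 2 : ℝ) • (M + Mᵀ)) (θ • ((1 / 2 : ℝ) • (M - Mᵀ)))
      (θ • ((1 / 2 : ℝ) • (M - Mᵀ))ᵀ) ((1 / 2 : ℝ) • (M + Mᵀ))).PosSemidef) (x y : m → ℝ) :
    -(θ * (x ⬝ᵥ M *ᵥ y - y ⬝ᵥ M *ᵥ x)) ≤ x ⬝ᵥ M *ᵥ x + y ⬝ᵥ M *ᵥ y := by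
  have hxy := h.dotProduct_mulVec_nonneg (Sum.elim x y)
  simp only [star_trivial, fromBlocks_mulVec, Sum.elim_comp_inl, Sum.elim_comp_inr,
    sumElim_dotProduct_sumElim, dotProduct_add, dotProduct_add_transpose_mulVec, transpose_smul,
    transpose_sub, transpose_transpose, smul_mulVec, sub_mulVec, dotProduct_sub, dotProduct_smul,
    dotProduct_transpose_mulVec, smul_eq_mul] at hxy
  linarith

theorem IsAdmissible.mul_abs_im_le_re {n : ℕ} {θ : ℝ} {M : Matrix (Fin n) (Fin n) ℝ}
    (h : IsAdmissible θ M) (u : Fin n → ℂ) :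
    θ * |(star u ⬝ᵥ M.map ((↑) : ℝ → ℂ) *ᵥ u).im| ≤
      (star u ⬝ᵥ M.map ((↑) : ℝ → ℂ) *ᵥ u).re := by
  obtain ⟨hθ, hpos, hneg⟩ := h
  rw [re_star_dotProduct_map_ofReal_mulVec, im_star_dotProduct_map_ofReal_mulVec]
  set x : Fin n → ℝ := fun i => (u i).re
  set y : Fin n → ℝ := fun i => (u i).im
  have hlower := mul_sub_le_of_posSemidef_fromBlocks hpos x y
  have hupper := mul_sub_le_of_posSemidef_fromBlocks hneg x y
  have habs : |θ * (x ⬝ᵥ M *ᵥ y - y ⬝ᵥ M *ᵥ x)| ≤ x ⬝ᵥ M *ᵥ x + y ⬝ᵥ M *ᵥ y :=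
    abs_le'.mpr ⟨by linarith, hlower⟩
  rwa [abs_mul, abs_of_nonneg hθ] at habs

end Complexification

section Exponential

variable {N : Type*} [Fintype N] [DecidableEq N]

open scoped Matrix.Norms.Operator in
theorem hasSum_exp_mulVec {𝕜 : Type*} [RCLike 𝕜] (B : Matrix N N 𝕜) (x : N → 𝕜) :
    HasSum (fun k : ℕ => (k.factorial : 𝕜)⁻¹ • (B ^ k *ᵥ x)) (NormedSpace.exp B *ᵥ x) := by
  let mulVecAt : Matrix N N 𝕜 →ₗ[𝕜] (N → 𝕜) := (mulVecBilin 𝕜 𝕜).flip x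
  have hsum := (NormedSpace.exp_series_hasSum_exp' (𝕂 := 𝕜) B).map mulVecAt
    (LinearMap.continuous_of_finiteDimensional _)
  exact hsum.congr_fun fun k => (smul_mulVec _ _ _).symm

theorem exp_mulVec_eq_sum_of_pow_mulVec_eq_zero {𝕜 : Type*} [RCLike 𝕜] {B : Matrix N N 𝕜}
    {x : N → 𝕜} {K : ℕ} (hK : B ^ K *ᵥ x = 0) :
    NormedSpace.exp B *ᵥ x = ∑ k ∈ Finset.range K, (k.factorial : 𝕜)⁻¹ • (B ^ k *ᵥ x) := by
  refine (hasSum_exp_mulVec B x).unique (hasSum_sum_of_ne_finset_zero fun k hk => ?_)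
  obtain ⟨j, rfl⟩ := Nat.exists_eq_add_of_le' (Finset.mem_range.not.mp hk |> not_lt.mp)
  rw [pow_add, ← mulVec_mulVec, hK, mulVec_zero, smul_zero]

theorem exp_smul_one (c : ℂ) :
    NormedSpace.exp (c • (1 : Matrix N N ℂ)) = Complex.exp c • (1 : Matrix N N ℂ) := by
  rw [smul_one_eq_diagonal, smul_one_eq_diagonal, exp_diagonal, Pi.exp_def, Complex.exp_eq_exp_ℂ]

theorem exp_smul_mulVec_of_pow_sub_smul_mulVec_eq_zero {B : Matrix N N ℂ} {x : N → ℂ} {μ : ℂ}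
    {K : ℕ} (hK : (B - μ • 1) ^ K *ᵥ x = 0) (t : ℂ) :
    NormedSpace.exp (t • B) *ᵥ x = ∑ k ∈ Finset.range K,
      (t ^ k * Complex.exp (t * μ)) • (k.factorial : ℂ)⁻¹ • ((B - μ • 1) ^ k *ᵥ x) := by
  have hsplit : t • B = (t * μ) • (1 : Matrix N N ℂ) + t • (B - μ • 1) := by
    rw [smul_sub, smul_smul, add_sub_cancel]
  have hnil : (t • (B - μ • 1)) ^ K *ᵥ x = 0 := by
    rw [smul_pow, smul_mulVec, hK, smul_zero]
  rw [hsplit, exp_add_of_commute _ _ ((Commute.one_left _).smul_left _), exp_smul_one,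
    ← mulVec_mulVec, smul_mulVec, one_mulVec, exp_mulVec_eq_sum_of_pow_mulVec_eq_zero hnil,
    Finset.smul_sum]
  refine Finset.sum_congr rfl fun k _ => ?_
  simp only [smul_pow, smul_mulVec, smul_smul]
  ring_nf

theorem tendsto_pow_mul_cexp_atTop_nhds_zero (k : ℕ) {μ : ℂ} (hμ : μ.re < 0) :
    Tendsto (fun t : ℝ => (t : ℂ) ^ k * Complex.exp (t * μ)) atTop (𝓝 0) := by
  rw [tendsto_zero_iff_norm_tendsto_zero]
  refine (tendsto_rpow_mul_exp_neg_mul_atTop_nhds_zero k (-μ.re) (neg_pos.mpr hμ)).congr' ?_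
  filter_upwards [eventually_ge_atTop 0] with t ht
  simp [Complex.norm_exp, abs_of_nonneg ht, mul_comm]

end Exponential

section Semistability

variable {N : Type*} [Fintype N] [DecidableEq N]

theorem mem_maxGenEigenspace_toLin'_iff {R : Type*} [CommRing R] {B : Matrix N N R} {μ : R}
    {z : N → R} :
    z ∈ Module.End.maxGenEigenspace (toLin' B) μ ↔ ∃ k : ℕ, (B - μ • 1) ^ k *ᵥ z = 0 := by
  have hsub : toLin' B - μ • 1 = toLin' (B - μ • 1) := by
    rw [map_sub, map_smul, toLin'_one, Module.End.one_eq_id]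
  simp only [Module.End.mem_maxGenEigenspace, hsub, ← toLin'_pow, toLin'_apply]

theorem mulVec_eq_zero_of_pow_mulVec_eq_zero {R : Type*} [CommRing R] {B : Matrix N N R}
    (hker : ∀ z, B *ᵥ (B *ᵥ z) = 0 → B *ᵥ z = 0) {z : N → R} :
    ∀ {k : ℕ}, B ^ k *ᵥ z = 0 → B *ᵥ z = 0
  | 0, h => by rw [← one_mulVec z, ← pow_zero B, h, mulVec_zero]
  | 1, h => by rwa [pow_one] at h
  | k + 2, h => by
    rw [pow_succ', pow_succ', ← mulVec_mulVec, ← mulVec_mulVec] at h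
    refine mulVec_eq_zero_of_pow_mulVec_eq_zero (k := k + 1) hker ?_
    rw [pow_succ', ← mulVec_mulVec, hker _ h]

theorem exists_tendsto_exp_smul_mulVec {B : Matrix N N ℂ}
    (hspec : ∀ μ, Module.End.HasEigenvalue (toLin' B) μ → μ.re < 0 ∨ μ = 0)
    (hker : ∀ z, B *ᵥ (B *ᵥ z) = 0 → B *ᵥ z = 0) (x : N → ℂ) :
    ∃ y, Tendsto (fun t : ℝ => NormedSpace.exp ((t : ℂ) • B) *ᵥ x) atTop (𝓝 y) := by
  have hx : x ∈ ⨆ μ, Module.End.maxGenEigenspace (toLin' B) μ := by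
    rw [Module.End.iSup_maxGenEigenspace_eq_top]
    exact Submodule.mem_top
  induction hx using Submodule.iSup_induction' with
  | zero => exact ⟨0, by simp only [mulVec_zero, tendsto_const_nhds]⟩
  | add x₁ x₂ _ _ h₁ h₂ =>
    obtain ⟨y₁, hy₁⟩ := h₁
    obtain ⟨y₂, hy₂⟩ := h₂
    exact ⟨y₁ + y₂, by simpa only [mulVec_add] using hy₁.add hy₂⟩
  | mem μ z hz =>
    rcases eq_or_ne z 0 with rfl | hz0
    · exact ⟨0, by simp only [mulVec_zero, tendsto_const_nhds]⟩
    have hμ : Module.End.HasEigenvalue (toLin' B) μ :=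
      Module.End.HasUnifEigenvalue.lt zero_lt_one
        (Submodule.ne_bot_iff _ |>.mpr ⟨z, hz, hz0⟩)
    obtain ⟨K, hK⟩ := mem_maxGenEigenspace_toLin'_iff.mp hz
    rcases hspec μ hμ with hneg | rfl
    · refine ⟨∑ k ∈ Finset.range K,
        (0 : ℂ) • (k.factorial : ℂ)⁻¹ • ((B - μ • 1) ^ k *ᵥ z), ?_⟩
      simp only [exp_smul_mulVec_of_pow_sub_smul_mulVec_eq_zero hK]
      exact tendsto_finsetSum _ fun k _ =>
        (tendsto_pow_mul_cexp_atTop_nhds_zero k hneg).smul_const _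
    · rw [zero_smul, sub_zero] at hK
      have hBz : B *ᵥ z = 0 := mulVec_eq_zero_of_pow_mulVec_eq_zero hker hK
      have hexp (t : ℝ) : NormedSpace.exp ((t : ℂ) • B) *ᵥ z = z := by
        have hnil : ((t : ℂ) • B) ^ 1 *ᵥ z = 0 := by rw [pow_one, smul_mulVec, hBz, smul_zero]
        rw [exp_mulVec_eq_sum_of_pow_mulVec_eq_zero hnil]
        simp
      exact ⟨z, by simp only [hexp, tendsto_const_nhds]⟩

open scoped Matrix.Norms.Operator in
theorem map_ofReal_exp (A : Matrix N N ℝ) :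
    (NormedSpace.exp A).map ((↑) : ℝ → ℂ) = NormedSpace.exp (A.map ((↑) : ℝ → ℂ)) :=
  NormedSpace.map_exp Complex.ofRealHom.mapMatrix
    (continuous_id.matrix_map Complex.continuous_ofReal) A

theorem isSemistable_of_map_ofReal {A : Matrix N N ℝ}
    (hspec : ∀ μ, Module.End.HasEigenvalue (toLin' (A.map ((↑) : ℝ → ℂ))) μ → μ.re < 0 ∨ μ = 0)
    (hker : ∀ z, A *ᵥ (A *ᵥ z) = 0 → A *ᵥ z = 0) : IsSemistable A := by
  intro x₀
  have hkerℂ (z : N → ℂ) (hz : A.map ((↑) : ℝ → ℂ) *ᵥ (A.map ((↑) : ℝ → ℂ) *ᵥ z) = 0) :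
      A.map ((↑) : ℝ → ℂ) *ᵥ z = 0 := by
    simp only [funext_iff, Complex.ext_iff, re_map_ofReal_mulVec, im_map_ofReal_mulVec,
      Pi.zero_apply, Complex.zero_re, Complex.zero_im, forall_and] at hz ⊢
    exact ⟨congrFun (hker _ (funext hz.1)), congrFun (hker _ (funext hz.2))⟩
  obtain ⟨y, hy⟩ := exists_tendsto_exp_smul_mulVec hspec hkerℂ fun i => (x₀ i : ℂ)
  have hcont : Continuous fun v : N → ℂ => fun i => (v i).re := by fun_prop
  refine ⟨fun i => (y i).re, ((hcont.tendsto y).comp hy).congr fun t => ?_⟩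
  have hmap : (t : ℂ) • A.map ((↑) : ℝ → ℂ) = (t • A).map ((↑) : ℝ → ℂ) := by
    ext i j
    simp
  ext i
  simp only [Function.comp_apply, hmap, ← map_ofReal_exp, re_map_ofReal_mulVec,
    Complex.ofReal_re]

theorem isSemistable_of_isSemistable_conj {A T : Matrix N N ℝ} (hT : IsUnit T)
    (h : IsSemistable (T⁻¹ * A * T)) : IsSemistable A := by
  intro x₀
  obtain ⟨y, hy⟩ := h (T⁻¹ *ᵥ x₀)
  have hTinv : T * T⁻¹ = 1 := mul_nonsing_inv T ((isUnit_iff_isUnit_det T).mp hT)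
  have hcont : Continuous fun v => T *ᵥ v := by fun_prop
  refine ⟨T *ᵥ y, ((hcont.tendsto y).comp hy).congr fun t => ?_⟩
  have hconj : t • (T⁻¹ * A * T) = T⁻¹ * (t • A) * T := by
    rw [mul_smul_comm, smul_mul_assoc]
  simp only [Function.comp_apply, hconj, exp_conj' T _ hT, mulVec_mulVec]
  simp only [mul_assoc, hTinv, mul_one]
  rw [← mul_assoc, hTinv, one_mul]

end Semistability

section CharacteristicEquation

variable {τ r ν θ s p : ℝ} {m z : ℂ}

theorem re_im_bounds_of_mul_add_eq_zero (hτ : 0 ≤ τ) (hp : 0 ≤ p) (hm : 0 ≤ m.re)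
    (hz0 : z ≠ 0) (hz : 0 ≤ z.re) (heq : z * ((1 + τ * z) * m + s) + (1 + r * z) * p = 0) :
    m.re + s + r * p ≤ τ * (z.im * m.im) ∧
      (1 + τ * z.re) * (z.im * m.im) + τ * z.im ^ 2 * m.re ≤ p := by
  have hnorm : 0 < Complex.normSq z := Complex.normSq_pos.mpr hz0
  have hconj : Complex.normSq z * ((1 + τ * z) * m + s)
      + ((starRingEnd ℂ) z + r * Complex.normSq z) * p = 0 := by
    rw [Complex.normSq_eq_conj_mul_self]
    linear_combination (starRingEnd ℂ) z * heq
  obtain ⟨hre, him⟩ := Complex.ext_iff.mp hconj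
  simp only [Complex.add_re, Complex.add_im, Complex.mul_re, Complex.mul_im, Complex.ofReal_re,
    Complex.ofReal_im, Complex.one_re, Complex.one_im, Complex.conj_re, Complex.conj_im,
    Complex.zero_re, Complex.zero_im] at hre him
  set Δ := Complex.normSq z with hΔ
  constructor
  · refine le_of_mul_le_mul_left ?_ hnorm
    have hzp : 0 ≤ z.re * p := mul_nonneg hz hp
    have hzm : 0 ≤ Δ * (τ * (z.re * m.re)) := by positivity
    linarith
  · refine le_of_mul_le_mul_left ?_ hnorm
    have hzp : 0 ≤ z.re ^ 2 * p := by positivity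
    have hexpand : Δ * p = z.re ^ 2 * p + z.im ^ 2 * p := by rw [hΔ, Complex.normSq_apply]; ring
    linear_combination hzp + z.im * him - hexpand

theorem eq_zero_of_re_nonneg_of_mul_add_eq_zero (hτ : 0 < τ) (hr : 0 ≤ r) (hθ : 0 ≤ θ)
    (hs : 0 < s) (hp : 0 ≤ p) (hm : θ * |m.im| ≤ m.re) (hν : ν * p ≤ m.re + s)
    (hgain : τ < (ν + r) * (1 + θ ^ 2)) (hz : 0 ≤ z.re)
    (heq : z * ((1 + τ * z) * m + s) + (1 + r * z) * p = 0) : z = 0 := by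
  by_contra hz0
  have hm0 : 0 ≤ m.re := (by positivity : 0 ≤ θ * |m.im|).trans hm
  obtain ⟨hre, him⟩ := re_im_bounds_of_mul_add_eq_zero hτ.le hp hm0 hz0 hz heq
  set q := z.im * m.im with hq
  have hqτ : m.re < τ * q := by linarith [mul_nonneg hr hp]
  have hq0 : 0 < q := pos_of_mul_pos_right (hm0.trans_lt hqτ) hτ.le
  have hsector : θ ^ 2 * q ≤ τ * z.im ^ 2 * m.re := by
    refine le_of_mul_le_mul_right ?_ hq0
    calc θ ^ 2 * q * q = z.im ^ 2 * (θ * |m.im|) ^ 2 := by rw [mul_pow, sq_abs, hq]; ring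
      _ ≤ z.im ^ 2 * m.re ^ 2 := by gcongr
      _ ≤ z.im ^ 2 * (m.re * (τ * q)) := by rw [sq m.re]; gcongr
      _ = τ * z.im ^ 2 * m.re * q := by ring
  have hqp : (1 + θ ^ 2) * q ≤ p := by
    have hzq : 0 ≤ τ * z.re * q := by positivity
    linarith
  have hνr : 0 < ν + r := pos_of_mul_pos_left (hτ.trans hgain) (by positivity)
  have hcontra : (ν + r) * (1 + θ ^ 2) * q ≤ τ * q :=
    calc (ν + r) * (1 + θ ^ 2) * q = (ν + r) * ((1 + θ ^ 2) * q) := by ring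
      _ ≤ (ν + r) * p := by gcongr
      _ ≤ τ * q := by linarith
  exact hgain.not_ge (le_of_mul_le_mul_right hcontra hq0)

end CharacteristicEquation

section DroopDynamics

/-- `B` is the state matrix of the linear system `τ M u' + (M + S) u = y`, `y' + r P u' = -P u`
in the state `(u, y)`. This is the closed loop after `u` has been scaled by the maximal currents,
with `M = Y⁻¹Υ`, `S = RΥ` and `P = βL`; the leading coefficients are kept on the left so that no
inverse of `M` occurs. -/
def IsDroopDynamics {m 𝕜 : Type*} [Fintype m] [DecidableEq m] [CommRing 𝕜] (τ r : 𝕜)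
    (M S P : Matrix m m 𝕜) (B : Matrix (m ⊕ m) (m ⊕ m) 𝕜) : Prop :=
  fromBlocks (τ • M) 0 (r • P) 1 * B = fromBlocks (-(M + S)) 1 (-P) 0

namespace IsDroopDynamics

variable {m 𝕜 : Type*} [Fintype m] [DecidableEq m] [CommRing 𝕜] {τ r : 𝕜} {M S P : Matrix m m 𝕜}
  {B : Matrix (m ⊕ m) (m ⊕ m) 𝕜}

theorem map {R : Type*} [CommRing R] (f : 𝕜 →+* R) (h : IsDroopDynamics τ r M S P B) :
    IsDroopDynamics (f τ) (f r) (M.map f) (S.map f) (P.map f) (B.map f) := by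
  have hmap := congrArg (fun A => A.map f) h
  simpa [IsDroopDynamics, Matrix.map_mul, fromBlocks_map, Matrix.map_smulₛₗ f f,
    Matrix.map_add f, Matrix.map_neg f] using hmap

theorem mulVec_eq (h : IsDroopDynamics τ r M S P B) (z : m ⊕ m → 𝕜) :
    τ • (M *ᵥ ((B *ᵥ z) ∘ Sum.inl)) = z ∘ Sum.inr - (M + S) *ᵥ (z ∘ Sum.inl) ∧
      (B *ᵥ z) ∘ Sum.inr + r • (P *ᵥ ((B *ᵥ z) ∘ Sum.inl)) = -(P *ᵥ (z ∘ Sum.inl)) := by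
  have hz := congrArg (· *ᵥ z) h
  simp only [← mulVec_mulVec, fromBlocks_mulVec, Sum.elim_eq_iff, smul_mulVec, zero_mulVec,
    one_mulVec, neg_mulVec, add_zero] at hz
  exact ⟨by rw [hz.1]; abel, by rw [add_comm, hz.2]⟩

theorem inl_ne_zero (h : IsDroopDynamics τ r M S P B) {μ : 𝕜} {z : m ⊕ m → 𝕜}
    (hz : B *ᵥ z = μ • z) (hz0 : z ≠ 0) : z ∘ Sum.inl ≠ 0 := by
  intro hu
  obtain ⟨hfst, -⟩ := h.mulVec_eq z
  rw [hz, Pi.smul_comp, hu, smul_zero, mulVec_zero, smul_zero, mulVec_zero, sub_zero] at hfst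
  refine hz0 (funext fun i => ?_)
  rcases i with i | i
  · exact congrFun hu i
  · exact (congrFun hfst i).symm

theorem characteristic_eq (h : IsDroopDynamics τ r M S P B) {μ : 𝕜} {z : m ⊕ m → 𝕜}
    (hz : B *ᵥ z = μ • z) (v : m → 𝕜) :
    μ * ((1 + τ * μ) * (v ⬝ᵥ M *ᵥ (z ∘ Sum.inl)) + v ⬝ᵥ S *ᵥ (z ∘ Sum.inl)) +
      (1 + r * μ) * (v ⬝ᵥ P *ᵥ (z ∘ Sum.inl)) = 0 := by
  obtain ⟨hfst, hsnd⟩ := h.mulVec_eq z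
  have hfst := congrArg (v ⬝ᵥ ·) hfst
  have hsnd := congrArg (v ⬝ᵥ ·) hsnd
  simp only [hz, Pi.smul_comp, mulVec_smul, add_mulVec, dotProduct_smul, dotProduct_add,
    dotProduct_sub, dotProduct_neg, smul_eq_mul] at hfst hsnd
  linear_combination μ * hfst + hsnd

theorem dotProduct_mulVec_eq_zero (h : IsDroopDynamics τ r M S P B) (hP : P.IsSymm)
    {z : m ⊕ m → 𝕜} (hz : B *ᵥ (B *ᵥ z) = 0) :
    ((B *ᵥ z) ∘ Sum.inl) ⬝ᵥ (M + S) *ᵥ ((B *ᵥ z) ∘ Sum.inl) = 0 := by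
  obtain ⟨hfst, hsnd⟩ := h.mulVec_eq (B *ᵥ z)
  obtain ⟨-, hrange⟩ := h.mulVec_eq z
  simp only [hz, Pi.zero_comp, mulVec_zero, smul_zero, add_zero] at hfst hsnd
  have hPu : P *ᵥ ((B *ᵥ z) ∘ Sum.inl) = 0 := neg_eq_zero.mp hsnd.symm
  rw [hPu, smul_zero, add_zero] at hrange
  rw [← sub_eq_zero.mp hfst.symm, hrange, dotProduct_neg, ← dotProduct_transpose_mulVec, hP.eq,
    hPu, dotProduct_zero, neg_zero]

end IsDroopDynamics

variable {n : ℕ} {τ r ν θ : ℝ} {M S P : Matrix (Fin n) (Fin n) ℝ}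
  {B : Matrix (Fin n ⊕ Fin n) (Fin n ⊕ Fin n) ℝ}

theorem mul_re_star_dotProduct_le {m : Type*} [Fintype m] {M S P : Matrix m m ℝ}
    (hν : ((1 / 2 : ℝ) • (M + Mᵀ) + S - ν • P).PosSemidef) (u : m → ℂ) :
    ν * (star u ⬝ᵥ P.map ((↑) : ℝ → ℂ) *ᵥ u).re ≤
      (star u ⬝ᵥ M.map ((↑) : ℝ → ℂ) *ᵥ u).re + (star u ⬝ᵥ S.map ((↑) : ℝ → ℂ) *ᵥ u).re := by
  have hreal (x : m → ℝ) : ν * (x ⬝ᵥ P *ᵥ x) ≤ x ⬝ᵥ M *ᵥ x + x ⬝ᵥ S *ᵥ x := by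
    have hx := hν.dotProduct_mulVec_nonneg x
    rw [star_trivial, sub_mulVec, add_mulVec (_ • _), smul_mulVec, smul_mulVec, dotProduct_sub,
      dotProduct_add, dotProduct_smul, dotProduct_smul, dotProduct_add_transpose_mulVec,
      smul_eq_mul, smul_eq_mul] at hx
    linarith
  simp only [re_star_dotProduct_map_ofReal_mulVec]
  linarith [hreal fun i => (u i).re, hreal fun i => (u i).im]

open scoped ComplexOrder in
theorem IsDroopDynamics.eq_zero_of_hasEigenvalue (h : IsDroopDynamics τ r M S P B) (hτ : 0 < τ)
    (hr : 0 ≤ r) (hS : S.PosDef) (hP : P.PosSemidef) (hθ : IsAdmissible θ M)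
    (hν : ((1 / 2 : ℝ) • (M + Mᵀ) + S - ν • P).PosSemidef)
    (hgain : τ < (ν + r) * (1 + θ ^ 2)) {μ : ℂ}
    (hμ : Module.End.HasEigenvalue (toLin' (B.map ((↑) : ℝ → ℂ))) μ) (hre : 0 ≤ μ.re) : μ = 0 := by
  obtain ⟨z, hz⟩ := hμ.exists_hasEigenvector
  have hBz : B.map ((↑) : ℝ → ℂ) *ᵥ z = μ • z := hz.apply_eq_smul
  have hℂ : IsDroopDynamics (τ : ℂ) (r : ℂ) (M.map (↑)) (S.map (↑)) (P.map (↑)) (B.map (↑)) :=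
    h.map Complex.ofRealHom
  set u := z ∘ Sum.inl
  have hs : 0 < star u ⬝ᵥ S.map ((↑) : ℝ → ℂ) *ᵥ u :=
    (posDef_map_ofReal hS).dotProduct_mulVec_pos (hℂ.inl_ne_zero hBz hz.2)
  have hp : 0 ≤ star u ⬝ᵥ P.map ((↑) : ℝ → ℂ) *ᵥ u :=
    (posSemidef_map_ofReal hP).dotProduct_mulVec_nonneg u
  have heq := hℂ.characteristic_eq hBz (star u)
  have hν := mul_re_star_dotProduct_le hν u
  have hm := hθ.mul_abs_im_le_re u
  set s := star u ⬝ᵥ S.map ((↑) : ℝ → ℂ) *ᵥ u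
  set p := star u ⬝ᵥ P.map ((↑) : ℝ → ℂ) *ᵥ u
  rw [Complex.eq_re_of_ofReal_le hs.le, Complex.eq_re_of_ofReal_le hp] at heq
  exact eq_zero_of_re_nonneg_of_mul_add_eq_zero hτ hr hθ.1 (Complex.pos_iff.mp hs).1
    (Complex.nonneg_iff.mp hp).1 hm hν hgain hre heq

theorem IsAdmissible.dotProduct_mulVec_nonneg (hθ : IsAdmissible θ M) (x : Fin n → ℝ) :
    0 ≤ x ⬝ᵥ M *ᵥ x := by
  simpa using mul_sub_le_of_posSemidef_fromBlocks hθ.2.1 x 0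

theorem IsDroopDynamics.mulVec_eq_zero_of_mulVec_mulVec_eq_zero {m : Type*} [Fintype m]
    [DecidableEq m] {M S P : Matrix m m ℝ} {B : Matrix (m ⊕ m) (m ⊕ m) ℝ}
    (h : IsDroopDynamics τ r M S P B) (hM : ∀ x, 0 ≤ x ⬝ᵥ M *ᵥ x) (hS : S.PosDef)
    (hP : P.IsSymm) (z : m ⊕ m → ℝ) (hz : B *ᵥ (B *ᵥ z) = 0) : B *ᵥ z = 0 := by
  by_contra hBz
  have hu := h.inl_ne_zero (μ := 0) (by rw [hz, zero_smul]) hBz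
  have hMS := h.dotProduct_mulVec_eq_zero hP hz
  rw [add_mulVec, dotProduct_add] at hMS
  exact (add_pos_of_nonneg_of_pos (hM _) (hS.dotProduct_mulVec_pos hu)).ne' hMS

theorem IsDroopDynamics.isSemistable (h : IsDroopDynamics τ r M S P B) (hτ : 0 < τ)
    (hr : 0 ≤ r) (hS : S.PosDef) (hP : P.PosSemidef) (hθ : IsAdmissible θ M)
    (hν : ((1 / 2 : ℝ) • (M + Mᵀ) + S - ν • P).PosSemidef)
    (hgain : τ < (ν + r) * (1 + θ ^ 2)) : IsSemistable B := by
  refine isSemistable_of_map_ofReal (fun μ hμ => ?_)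
    (h.mulVec_eq_zero_of_mulVec_mulVec_eq_zero hθ.dotProduct_mulVec_nonneg hS
      (isHermitian_iff_isSymm.mp hP.isHermitian))
  rcases lt_or_ge μ.re 0 with hneg | hnonneg
  · exact .inl hneg
  · exact .inr (h.eq_zero_of_hasEigenvalue hτ hr hS hP hθ hν hgain hμ hnonneg)

end DroopDynamics

section Laplacian

variable {m : Type*} [Fintype m]

theorem two_mul_dotProduct_mulVec_of_isSymm {R : Type*} [CommRing R] {L : Matrix m m R}
    (hL : L.IsSymm) (x : m → R) :
    2 * (x ⬝ᵥ L *ᵥ x) =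
      ∑ i, ∑ j, -L i j * (x i - x j) ^ 2 + 2 * ∑ i, (∑ j, L i j) * x i ^ 2 := by
  have hswap : ∑ i, ∑ j, L i j * x j ^ 2 = ∑ i, ∑ j, L i j * x i ^ 2 := by
    rw [Finset.sum_comm]
    simp only [hL.apply]
  have hexpand : ∑ i, ∑ j, -L i j * (x i - x j) ^ 2 = 2 * ∑ i, ∑ j, x i * (L i j * x j)
      - ∑ i, ∑ j, L i j * x i ^ 2 - ∑ i, ∑ j, L i j * x j ^ 2 := by
    simp only [Finset.mul_sum, ← Finset.sum_sub_distrib]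
    exact Finset.sum_congr rfl fun i _ => Finset.sum_congr rfl fun j _ => by ring
  simp only [hexpand, hswap, dotProduct, mulVec, ← Finset.mul_sum, ← Finset.sum_mul]
  ring

theorem posSemidef_of_offDiag_nonpos_of_rowSum_nonneg {L : Matrix m m ℝ} (hL : L.IsSymm)
    (hoff : ∀ i j, i ≠ j → L i j ≤ 0) (hrow : ∀ i, 0 ≤ ∑ j, L i j) : L.PosSemidef := by
  refine .of_dotProduct_mulVec_nonneg hL fun x => ?_
  have hedges : 0 ≤ ∑ i, ∑ j, -L i j * (x i - x j) ^ 2 := by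
    refine Finset.sum_nonneg fun i _ => Finset.sum_nonneg fun j _ => ?_
    rcases eq_or_ne i j with rfl | hij
    · simp
    · exact mul_nonneg (neg_nonneg.mpr (hoff i j hij)) (sq_nonneg _)
  have hrows : 0 ≤ ∑ i, (∑ j, L i j) * x i ^ 2 :=
    Finset.sum_nonneg fun i _ => mul_nonneg (hrow i) (sq_nonneg _)
  rw [star_trivial]
  linarith [two_mul_dotProduct_mulVec_of_isSymm hL x]

end Laplacian

section ClosedLoop

/-- The closed-loop matrix `A_c` of the DC microgrid under distributed cooperative droop control,
with filter time constants `D`, conductance matrix `Y`, droop resistances `R`, maximal currents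
`Υ`, communication Laplacian `L`, and proportional and integral gains `Φ` and `Ψ`. -/
noncomputable def closedLoopMatrix {m : Type*} [Fintype m] [DecidableEq m]
    (D Y R Υ L Φ Ψ : Matrix m m ℝ) : Matrix (m ⊕ m) (m ⊕ m) ℝ :=
  fromBlocks (-(D⁻¹ * (1 + Y * R))) (D⁻¹ * Y)
    (-(Ψ * L * Υ⁻¹) + Φ * L * Υ⁻¹ * D⁻¹ * (1 + Y * R)) (-(Φ * L * Υ⁻¹ * D⁻¹ * Y))

theorem isDroopDynamics_conj_closedLoopMatrix {m : Type*} [Fintype m] [DecidableEq m]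
    {Y Υ : Matrix m m ℝ} (hY : IsUnit Y.det) (hΥ : IsUnit Υ.det) (R L : Matrix m m ℝ) {τ : ℝ}
    (hτ : τ ≠ 0) (r β : ℝ) :
    IsDroopDynamics τ r (Y⁻¹ * Υ) (R * Υ) (β • L)
      ((fromBlocks Υ 0 0 1)⁻¹ * closedLoopMatrix (τ • 1) Y R Υ L ((r * β) • 1) (β • 1) *
        fromBlocks Υ 0 0 1) := by
  have hinv : (fromBlocks Υ 0 0 (1 : Matrix m m ℝ))⁻¹ = fromBlocks Υ⁻¹ 0 0 1 :=
    inv_eq_right_inv (by simp [fromBlocks_multiply, mul_nonsing_inv Υ hΥ])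
  have hD : (τ • (1 : Matrix m m ℝ))⁻¹ = τ⁻¹ • 1 :=
    inv_eq_right_inv (by rw [smul_one_mul, smul_smul, mul_inv_cancel₀ hτ, one_smul])
  have hscaled : fromBlocks (τ • (Y⁻¹ * Υ)) 0 (r • β • L) (1 : Matrix m m ℝ) *
      fromBlocks Υ⁻¹ 0 0 1 = fromBlocks (τ • Y⁻¹) 0 ((r * β) • (L * Υ⁻¹)) 1 := by
    simp [fromBlocks_multiply, mul_assoc, mul_nonsing_inv Υ hΥ, smul_smul]
  have hloop : fromBlocks (τ • Y⁻¹) 0 ((r * β) • (L * Υ⁻¹)) 1 *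
      closedLoopMatrix (τ • 1) Y R Υ L ((r * β) • 1) (β • 1) =
        fromBlocks (-(Y⁻¹ + R)) 1 (-(β • (L * Υ⁻¹))) 0 := by
    simp only [closedLoopMatrix, hD, fromBlocks_multiply, mul_add, mul_one, ← mul_assoc,
      smul_mul_assoc, mul_smul_comm, one_mul, neg_add_rev, smul_smul, mul_neg,
      nonsing_inv_mul Y hY, inv_mul_cancel₀ hτ, one_smul, zero_mul, smul_zero,
      neg_zero, add_zero, add_neg_cancel, fromBlocks_inj, and_true, true_and]
    abel
  rw [IsDroopDynamics, hinv, ← mul_assoc, ← mul_assoc, hscaled, hloop, fromBlocks_multiply]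
  simp [mul_assoc, add_mul, nonsing_inv_mul Υ hΥ]

theorem posDef_diagonal_mul_diagonal {m : Type*} [Fintype m] [DecidableEq m] {v w : m → ℝ}
    (hv : ∀ i, 0 < v i) (hw : ∀ i, 0 < w i) : (diagonal v * diagonal w).PosDef := by
  rw [diagonal_mul_diagonal]
  exact .diagonal fun i => mul_pos (hv i) (hw i)

theorem closedLoop_semistable_c2_general {n : ℕ} {Y R Υ L : Matrix (Fin n) (Fin n) ℝ}
    {τ rbar β ν θ : ℝ} (hYsymm : Y.IsSymm) (hY : IsUnit Y) (hΥsymm : Υ.IsSymm)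
    (hRΥ : (R * Υ).PosDef) (hL : L.PosSemidef) (hτ : 0 < τ) (hrbar : 0 ≤ rbar) (hβ : 0 ≤ β)
    (hpsd : ((1 / 2 : ℝ) • (Y⁻¹ * Υ + Υ * Y⁻¹) + R * Υ - (ν * β) • L).PosSemidef)
    (hθ : IsAdmissible θ (Y⁻¹ * Υ)) (hgain : τ < (ν + rbar) * θ ^ 2 + ν + rbar) :
    IsSemistable (closedLoopMatrix (τ • 1) Y R Υ L ((rbar * β) • 1) (β • 1)) := by
  have hΥdet : IsUnit Υ.det := by
    have hdet := (isUnit_iff_isUnit_det _).mp hRΥ.isUnit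
    rw [det_mul] at hdet
    exact isUnit_of_mul_isUnit_right hdet
  have hT : IsUnit (fromBlocks Υ 0 0 (1 : Matrix (Fin n) (Fin n) ℝ)) := by
    rwa [isUnit_iff_isUnit_det, det_fromBlocks_zero₂₁, det_one, mul_one]
  have htranspose : (Y⁻¹ * Υ)ᵀ = Υ * Y⁻¹ := by
    rw [transpose_mul, hΥsymm.eq, transpose_nonsing_inv, hYsymm.eq]
  refine isSemistable_of_isSemistable_conj hT ?_
  refine (isDroopDynamics_conj_closedLoopMatrix ((isUnit_iff_isUnit_det Y).mp hY) hΥdet R L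
    hτ.ne' rbar β).isSemistable hτ hrbar hRΥ (hL.smul hβ) hθ (ν := ν) ?_ ?_
  · rwa [htranspose, smul_smul]
  · linarith

end ClosedLoop

/-- Sufficient condition c2) for semistability of the closed-loop matrix
`A_c` of the distributed cooperative droop control. -/
theorem closedLoop_semistable_c2
    (n : ℕ) (hn : 2 ≤ n)
    (Yc L : Matrix (Fin n) (Fin n) ℝ)
    (hYcsym : Yc.IsSymm) (hLsym : L.IsSymm)
    (hYcoff : ∀ i j, i ≠ j → Yc i j ≤ 0) (hLoff : ∀ i j, i ≠ j → L i j ≤ 0)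
    (hYcrow : ∀ i, ∑ j, Yc i j = 0) (hLrow : ∀ i, ∑ j, L i j = 0)
    (hYcrank : Yc.rank = n - 1) (hLrank : L.rank = n - 1)
    (G : Fin n → ℝ) (hG : ∀ i, 0 ≤ G i)
    (Ys : Matrix (Fin n) (Fin n) ℝ) (hYs : Ys = Matrix.diagonal G) (hYsne : Ys ≠ 0)
    (Y : Matrix (Fin n) (Fin n) ℝ) (hY : Y = Ys + Yc) (hYpd : Y.PosDef)
    (hYinvnn : ∀ i j, 0 ≤ Y⁻¹ i j)
    (Imax Rv : Fin n → ℝ) (hImax : ∀ i, 0 < Imax i) (hRv : ∀ i, 0 < Rv i)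
    (Υ R : Matrix (Fin n) (Fin n) ℝ)
    (hΥ : Υ = Matrix.diagonal Imax) (hR : R = Matrix.diagonal Rv)
    (τ rbar β ν₂ : ℝ) (hτ : 0 < τ) (hrbar : 0 < rbar) (hβ : 0 < β) (hν₂ : 0 < ν₂)
    (D Ψ Φ : Matrix (Fin n) (Fin n) ℝ)
    (hD : D = τ • (1 : Matrix (Fin n) (Fin n) ℝ))
    (hΨ : Ψ = β • (1 : Matrix (Fin n) (Fin n) ℝ))
    (hΦ : Φ = (rbar * β) • (1 : Matrix (Fin n) (Fin n) ℝ))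
    (hpsd : ((1 / 2 : ℝ) • (Y⁻¹ * Υ + Υ * Y⁻¹) + R * Υ
      - (ν₂ * β) • L).PosSemidef)
    (θ : ℝ) (hθ : IsAdmissible θ (Y⁻¹ * Υ))
    (hgain : (ν₂ + rbar) * θ ^ 2 + ν₂ + rbar > τ)
    (A_c : Matrix (Fin n ⊕ Fin n) (Fin n ⊕ Fin n) ℝ)
    (hA : A_c = Matrix.fromBlocks
      (-(D⁻¹ * (1 + Y * R))) (D⁻¹ * Y)
      (-(Ψ * L * Υ⁻¹) + Φ * L * Υ⁻¹ * D⁻¹ * (1 + Y * R)) (-(Φ * L * Υ⁻¹ * D⁻¹ * Y))) :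
    IsSemistable A_c := by
  subst hΥ hR hD hΨ hΦ hA
  exact closedLoop_semistable_c2_general (isHermitian_iff_isSymm.mp hYpd.isHermitian) hYpd.isUnit
    (isSymm_diagonal Imax) (posDef_diagonal_mul_diagonal hRv hImax)
    (posSemidef_of_offDiag_nonpos_of_rowSum_nonneg hLsym hLoff fun i => (hLrow i).ge)
    hτ hrbar.le hβ.le hpsd hθ hgain
end

section
/- Let n ≥ 1, let Y be an invertible real n×n matrix, L a real symmetric n×n matrix with L·1ₙ = 0, and D, R, Υ, Φ, Ψ real diagonal matrices with D, Υ, Ψ invertible and R, Υ, Ψ having strictly positive diagonals. Suppose the closed-loop matrix A_c is semistable, rank(A_c) = 2n − 1, and v_lᵀ v_r ≠ 0, where v_r = (Υ·1ₙ, (Y⁻¹+R)Υ·1ₙ) and v_l = (Υ⁻¹LΦΨ⁻¹·1ₙ, Ψ⁻¹·1ₙ). Then for every initial state z₀ = (Iᵐ(0), Uᵈ(0)) ∈ ℝ^{2n}, lim_{t→∞} exp(t·A_c)·z₀ = r_{c1}·v_r, where r_{c1} = [1ₙᵀΨ⁻¹(Uᵈ(0) + ΦLΥ⁻¹Iᵐ(0))]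 / [1ₙᵀΨ⁻¹(Y⁻¹+R)Υ·1ₙ]. In particular the current vector converges to r_{c1}·Υ·1ₙ, i.e. every node attains the same steady current ratio r_{c1}. -/
open Matrix Filter Topology

/-! Semistability forces every limit `y` of `exp(tA)x` into `ker A`, while `v ⬝ᵥ exp(tA)x` is
conserved for every `v` in the left kernel of `A`. If `A` has corank one, then `y = c • vr` for a
fixed nonzero null vector `vr`, and pairing with a nonzero left null vector `vl` gives
`vl ⬝ᵥ x = c * (vl ⬝ᵥ vr)`. As `x` is arbitrary, `vl ⬝ᵥ vr ≠ 0`, which determines `c`.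

For the closed loop, `w = Uᵈ + ΦLΥ⁻¹Iᵐ` satisfies `w' = -ΨLΥ⁻¹Iᵐ`. Hence `1ᵀΨ⁻¹w` is conserved when
`1ᵀL = 0`, and equilibria are found from `(Iᵐ)' = 0` and `w' = 0`, in which `Φ` no longer occurs. -/

section MatrixExponential

attribute [local instance] Matrix.linftyOpNormedRing Matrix.linftyOpNormedAlgebra

variable {N 𝕜 : Type*} [Fintype N] [DecidableEq N] [RCLike 𝕜]

theorem hasDerivAt_exp_smul_mulVec (A : Matrix N N 𝕜) (x : N → 𝕜) (t : 𝕜) :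
    HasDerivAt (fun t : 𝕜 => NormedSpace.exp (t • A) *ᵥ x)
      ((A * NormedSpace.exp (t • A)) *ᵥ x) t := by
  let applyTo : Matrix N N 𝕜 →L[𝕜] (N → 𝕜) := ((mulVecBilin 𝕜 𝕜).flip x).toContinuousLinearMap
  exact applyTo.hasFDerivAt.comp_hasDerivAt t (hasDerivAt_exp_smul_const' A t)

theorem vecMul_exp_of_vecMul_eq_zero {A : Matrix N N 𝕜} {v : N → 𝕜}
    (hv : v ᵥ* A = 0) : v ᵥ* NormedSpace.exp A = v := by
  have hseries : HasSum (fun k : ℕ => v ᵥ* ((k.factorial⁻¹ : 𝕜) • A ^ k))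
      (v ᵥ* NormedSpace.exp A) :=
    (vecMulBilin 𝕜 𝕜 v).toContinuousLinearMap.hasSum
      (NormedSpace.exp_series_hasSum_exp' (𝕂 := 𝕜) A)
  have hvanish : ∀ k : ℕ, k ≠ 0 → v ᵥ* ((k.factorial⁻¹ : 𝕜) • A ^ k) = 0 := by
    intro k hk
    obtain ⟨m, rfl⟩ := Nat.exists_eq_succ_of_ne_zero hk
    rw [vecMul_smul, pow_succ', ← vecMul_vecMul, hv, zero_vecMul, smul_zero]
  simpa using hseries.unique (hasSum_single 0 hvanish)

theorem exp_add_smul_mulVec (A : Matrix N N 𝕜) (x : N → 𝕜) (s t : 𝕜) :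
    NormedSpace.exp ((s + t) • A) *ᵥ x =
      NormedSpace.exp (s • A) *ᵥ (NormedSpace.exp (t • A) *ᵥ x) := by
  rw [add_smul, Matrix.exp_add_of_commute _ _ (((Commute.refl A).smul_left s).smul_right t),
    mulVec_mulVec]

theorem mulVec_eq_zero_of_exp_smul_mulVec_eq {A : Matrix N N 𝕜} {y : N → 𝕜}
    (hy : ∀ t : 𝕜, NormedSpace.exp (t • A) *ᵥ y = y) : A *ᵥ y = 0 := by
  have hderiv := hasDerivAt_exp_smul_mulVec A y 0
  simp only [hy, zero_smul, NormedSpace.exp_zero, mul_one] at hderiv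
  exact hderiv.unique (hasDerivAt_const 0 y)

theorem dotProduct_exp_smul_mulVec_of_vecMul_eq_zero {A : Matrix N N 𝕜} {v : N → 𝕜}
    (hv : v ᵥ* A = 0) (x : N → 𝕜) (t : 𝕜) : v ⬝ᵥ (NormedSpace.exp (t • A) *ᵥ x) = v ⬝ᵥ x := by
  rw [dotProduct_mulVec, vecMul_exp_of_vecMul_eq_zero (by rw [vecMul_smul, hv, smul_zero])]

theorem mulVec_eq_zero_of_tendsto_exp_smul {A : Matrix N N ℝ} {x y : N → ℝ}
    (hy : Tendsto (fun t : ℝ => NormedSpace.exp (t • A) *ᵥ x) atTop (𝓝 y)) : A *ᵥ y = 0 := by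
  refine mulVec_eq_zero_of_exp_smul_mulVec_eq fun s => ?_
  have hflow : Tendsto (fun t : ℝ => NormedSpace.exp ((s + t) • A) *ᵥ x) atTop
      (𝓝 (NormedSpace.exp (s • A) *ᵥ y)) := by
    simp only [exp_add_smul_mulVec]
    exact ((continuous_const.matrix_mulVec continuous_id).tendsto y).comp hy
  exact tendsto_nhds_unique hflow
    (hy.comp (tendsto_atTop_add_const_left atTop s tendsto_id))

theorem dotProduct_eq_of_tendsto_exp_smul {A : Matrix N N ℝ} {v x y : N → ℝ} (hv : v ᵥ* A = 0)
    (hy : Tendsto (fun t : ℝ => NormedSpace.exp (t • A) *ᵥ x) atTop (𝓝 y)) :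
    v ⬝ᵥ y = v ⬝ᵥ x := by
  have hpair : Tendsto (fun t : ℝ => v ⬝ᵥ (NormedSpace.exp (t • A) *ᵥ x)) atTop (𝓝 (v ⬝ᵥ y)) :=
    ((continuous_const.dotProduct continuous_id).tendsto y).comp hy
  simp only [dotProduct_exp_smul_mulVec_of_vecMul_eq_zero hv] at hpair
  exact tendsto_nhds_unique hpair tendsto_const_nhds

end MatrixExponential

theorem exists_smul_eq_of_mulVec_eq_zero {m n K : Type*} [Fintype n] [Field K] {A : Matrix m n K}
    (hrank : A.rank + 1 = Fintype.card n) {v y : n → K} (hv : A *ᵥ v = 0) (hv0 : v ≠ 0)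
    (hy : A *ᵥ y = 0) : ∃ c : K, c • v = y := by
  have hker : Module.finrank K (LinearMap.ker A.mulVecLin) = 1 := by
    have hrank_nullity := A.mulVecLin.finrank_range_add_finrank_ker
    rw [Module.finrank_fintype_fun_eq_card, ← hrank] at hrank_nullity
    exact Nat.add_left_cancel hrank_nullity
  obtain ⟨c, hc⟩ := (finrank_eq_one_iff_of_nonzero' (⟨v, hv⟩ : LinearMap.ker A.mulVecLin)
    (fun h => hv0 (congrArg Subtype.val h))).1 hker ⟨y, hy⟩
  exact ⟨c, congrArg Subtype.val hc⟩

theorem IsSemistable.tendsto_exp_smul_mulVec {N : Type*} [Fintype N] [DecidableEq N]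
    {A : Matrix N N ℝ} (hA : IsSemistable A) (hrank : A.rank + 1 = Fintype.card N)
    {vl vr : N → ℝ} (hl : vl ᵥ* A = 0) (hl0 : vl ≠ 0) (hr : A *ᵥ vr = 0) (hr0 : vr ≠ 0)
    (x : N → ℝ) :
    Tendsto (fun t : ℝ => NormedSpace.exp (t • A) *ᵥ x) atTop
      (𝓝 (((vl ⬝ᵥ x) / (vl ⬝ᵥ vr)) • vr)) := by
  have hlimit : ∀ z : N → ℝ, ∃ c : ℝ, vl ⬝ᵥ z = c * (vl ⬝ᵥ vr) ∧
      Tendsto (fun t : ℝ => NormedSpace.exp (t • A) *ᵥ z) atTop (𝓝 (c • vr)) := by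
    intro z
    obtain ⟨y, hy⟩ := hA z
    obtain ⟨c, rfl⟩ := exists_smul_eq_of_mulVec_eq_zero hrank hr hr0
      (mulVec_eq_zero_of_tendsto_exp_smul hy)
    exact ⟨c, by rw [← dotProduct_eq_of_tendsto_exp_smul hl hy, dotProduct_smul, smul_eq_mul], hy⟩
  have hpairing : vl ⬝ᵥ vr ≠ 0 := by
    refine fun h => hl0 (dotProduct_eq_zero vl fun z => ?_)
    obtain ⟨c, hc, -⟩ := hlimit z
    rw [hc, h, mul_zero]
  obtain ⟨c, hc, hlim⟩ := hlimit x
  rwa [hc, mul_div_cancel_right₀ c hpairing]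

theorem isUnit_det_diagonal_of_pos {ι K : Type*} [Fintype ι] [DecidableEq ι] [Field K]
    [LinearOrder K] [IsStrictOrderedRing K] {d : ι → K} (hd : ∀ i, 0 < d i) :
    IsUnit (diagonal d).det := by
  rw [det_diagonal]
  exact (Finset.prod_pos fun i _ => hd i).ne'.isUnit

section ClosedLoop

variable {ι K : Type*} [Fintype ι] [DecidableEq ι] [CommRing K]

/-- The closed-loop matrix `A_c` of the microgrid under distributed cooperative droop control,
acting on states `(Iᵐ, Uᵈ)`; the parameters are arbitrary square matrices. -/
noncomputable def closedLoop (D R Υ Φ Ψ Y L : Matrix ι ι K) : Matrix (ι ⊕ ι) (ι ⊕ ι) K :=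
  fromBlocks (-(D⁻¹ * (1 + Y * R))) (D⁻¹ * Y)
    (-(Ψ * L * Υ⁻¹) + Φ * L * Υ⁻¹ * D⁻¹ * (1 + Y * R)) (-(Φ * L * Υ⁻¹ * D⁻¹ * Y))

/-- The equilibrium `v_r = (Υ1, (Y⁻¹ + R)Υ1)` of the closed loop, at which every node has current
ratio `1`. -/
noncomputable def steadyState (R Υ Y : Matrix ι ι K) : ι ⊕ ι → K :=
  Sum.elim (Υ *ᵥ 1) (((Y⁻¹ + R) * Υ) *ᵥ 1)

/-- The coefficients of the linear functional `(Iᵐ, Uᵈ) ↦ 1ᵀΨ⁻¹(Uᵈ + ΦLΥ⁻¹Iᵐ)`, which the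
closed loop conserves when `1ᵀL = 0`. They form the vector `v_l` when `L` is symmetric and
`Υ`, `Φ`, `Ψ` are diagonal. -/
noncomputable def conservedCovector (Υ Φ Ψ L : Matrix ι ι K) : ι ⊕ ι → K :=
  Sum.elim ((1 ᵥ* Ψ⁻¹) ᵥ* (Φ * L * Υ⁻¹)) (1 ᵥ* Ψ⁻¹)

variable {R Υ Ψ Y L : Matrix ι ι K}

-- The left factor undoes the change of coordinates `(Iᵐ, Uᵈ) ↦ (Iᵐ, Uᵈ + ΦLΥ⁻¹Iᵐ)`.
theorem closedLoop_eq_mul (D R Υ Φ Ψ Y L : Matrix ι ι K) :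
    closedLoop D R Υ Φ Ψ Y L =
      fromBlocks 1 0 (-(Φ * L * Υ⁻¹)) 1 *
        fromBlocks (-(D⁻¹ * (1 + Y * R))) (D⁻¹ * Y) (-(Ψ * L * Υ⁻¹)) 0 := by
  simp [closedLoop, fromBlocks_multiply, Matrix.mul_assoc, add_comm]

theorem conservedCovector_vecMul_closedLoop (D R Φ Y : Matrix ι ι K) (hΨ : IsUnit Ψ.det)
    (hL : 1 ᵥ* L = 0) :
    conservedCovector Υ Φ Ψ L ᵥ* closedLoop D R Υ Φ Ψ Y L = 0 := by
  have hchange : conservedCovector Υ Φ Ψ L ᵥ* fromBlocks 1 0 (-(Φ * L * Υ⁻¹)) 1 =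
      Sum.elim (0 : ι → K) (1 ᵥ* Ψ⁻¹) := by
    simp [conservedCovector, vecMul_fromBlocks, Sum.elim_comp_inl, vecMul_neg]
  have hcoupling : (1 ᵥ* Ψ⁻¹) ᵥ* (Ψ * L * Υ⁻¹) = 0 := by
    rw [vecMul_vecMul, Matrix.mul_assoc, nonsing_inv_mul_cancel_left _ _ hΨ, ← vecMul_vecMul, hL,
      zero_vecMul]
  rw [closedLoop_eq_mul, ← vecMul_vecMul, hchange, vecMul_fromBlocks]
  simp [hcoupling, vecMul_neg, Sum.elim_comp_inl, Sum.elim_comp_inr]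

theorem mul_mul_inv_mulVec_mulVec_eq_zero (X : Matrix ι ι K) (hΥ : IsUnit Υ.det) {u : ι → K}
    (hL : L *ᵥ u = 0) : (X * L * Υ⁻¹) *ᵥ (Υ *ᵥ u) = 0 := by
  rw [mulVec_mulVec, nonsing_inv_mul_cancel_right _ _ hΥ, ← mulVec_mulVec, hL, mulVec_zero]

theorem closedLoop_mulVec_steadyState (D Φ Ψ : Matrix ι ι K) (hY : IsUnit Y.det)
    (hΥ : IsUnit Υ.det) (hL : L *ᵥ 1 = 0) :
    closedLoop D R Υ Φ Ψ Y L *ᵥ steadyState R Υ Y = 0 := by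
  have hcurrent : (D⁻¹ * Y) *ᵥ (((Y⁻¹ + R) * Υ) *ᵥ 1) = (D⁻¹ * (1 + Y * R)) *ᵥ (Υ *ᵥ 1) := by
    have hY' : Y * (Y⁻¹ + R) = 1 + Y * R := by rw [Matrix.mul_add, mul_nonsing_inv Y hY]
    simp only [mulVec_mulVec, Matrix.mul_assoc, ← hY']
  have hreduced : fromBlocks (-(D⁻¹ * (1 + Y * R))) (D⁻¹ * Y) (-(Ψ * L * Υ⁻¹)) 0 *ᵥ
      steadyState R Υ Y = 0 := by
    rw [steadyState, fromBlocks_mulVec]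
    simp [hcurrent, mul_mul_inv_mulVec_mulVec_eq_zero Ψ hΥ hL, neg_mulVec, -mulVec_mulVec]
  rw [closedLoop_eq_mul, ← mulVec_mulVec, hreduced, mulVec_zero]

theorem conservedCovector_dotProduct (Υ Φ Ψ L : Matrix ι ι K) (z : ι ⊕ ι → K) :
    conservedCovector Υ Φ Ψ L ⬝ᵥ z =
      1 ⬝ᵥ (Ψ⁻¹ *ᵥ (z ∘ Sum.inr + (Φ * L * Υ⁻¹) *ᵥ (z ∘ Sum.inl))) := by
  conv_lhs => rw [← Sum.elim_comp_inl_inr z, conservedCovector, sumElim_dotProduct_sumElim]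
  rw [dotProduct_mulVec, dotProduct_add, dotProduct_mulVec _ (Φ * L * Υ⁻¹), add_comm]

theorem conservedCovector_dotProduct_steadyState (R Φ Ψ Y : Matrix ι ι K) (hΥ : IsUnit Υ.det)
    (hL : L *ᵥ 1 = 0) :
    conservedCovector Υ Φ Ψ L ⬝ᵥ steadyState R Υ Y =
      1 ⬝ᵥ (Ψ⁻¹ *ᵥ (((Y⁻¹ + R) * Υ) *ᵥ 1)) := by
  rw [conservedCovector_dotProduct, steadyState, Sum.elim_comp_inl, Sum.elim_comp_inr,
    mul_mul_inv_mulVec_mulVec_eq_zero Φ hΥ hL, add_zero]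

theorem steadyState_ne_zero [Nonempty ι] [Nontrivial K] (R Y : Matrix ι ι K)
    (hΥ : IsUnit Υ.det) : steadyState R Υ Y ≠ 0 := by
  intro h
  have hcurrent : Υ *ᵥ 1 = Υ *ᵥ 0 := by
    rw [mulVec_zero]
    exact congrArg (· ∘ Sum.inl) h
  exact one_ne_zero (mulVec_injective_of_isUnit ((isUnit_iff_isUnit_det Υ).2 hΥ) hcurrent)

theorem conservedCovector_ne_zero [Nonempty ι] [Nontrivial K] (Υ Φ L : Matrix ι ι K)
    (hΨ : IsUnit Ψ.det) : conservedCovector Υ Φ Ψ L ≠ 0 := by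
  intro h
  have hvoltage : 1 ᵥ* Ψ⁻¹ = 0 ᵥ* Ψ⁻¹ := by
    rw [zero_vecMul]
    exact congrArg (· ∘ Sum.inr) h
  exact one_ne_zero (vecMul_injective_of_isUnit
    (isUnit_nonsing_inv_iff.2 ((isUnit_iff_isUnit_det Ψ).2 hΨ)) hvoltage)

end ClosedLoop

theorem closedLoop_steady_state_shunt_general {ι : Type*} [Fintype ι] [DecidableEq ι]
    {D R Υ Φ Ψ Y L : Matrix ι ι ℝ} (hY : IsUnit Y.det) (hΥ : IsUnit Υ.det) (hΨ : IsUnit Ψ.det)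
    (hL : L *ᵥ 1 = 0) (hLt : 1 ᵥ* L = 0) (hsemi : IsSemistable (closedLoop D R Υ Φ Ψ Y L))
    (hrank : (closedLoop D R Υ Φ Ψ Y L).rank + 1 = Fintype.card (ι ⊕ ι)) (z₀ : ι ⊕ ι → ℝ) :
    Tendsto (fun t : ℝ => NormedSpace.exp (t • closedLoop D R Υ Φ Ψ Y L) *ᵥ z₀) atTop
      (𝓝 (((1 ⬝ᵥ (Ψ⁻¹ *ᵥ (z₀ ∘ Sum.inr + (Φ * L * Υ⁻¹) *ᵥ (z₀ ∘ Sum.inl)))) /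
        (1 ⬝ᵥ (Ψ⁻¹ *ᵥ (((Y⁻¹ + R) * Υ) *ᵥ 1)))) • steadyState R Υ Y)) := by
  have : Nonempty ι := by
    by_contra hempty
    rw [not_nonempty_iff] at hempty
    simp at hrank
  rw [← conservedCovector_dotProduct, ← conservedCovector_dotProduct_steadyState R Φ Ψ Y hΥ hL]
  exact hsemi.tendsto_exp_smul_mulVec hrank
    (conservedCovector_vecMul_closedLoop D R Φ Y hΨ hLt) (conservedCovector_ne_zero Υ Φ L hΨ)
    (closedLoop_mulVec_steadyState D Φ Ψ hY hΥ hL) (steadyState_ne_zero R Y hΥ) z₀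

/-- For the semistable closed-loop matrix `A_c` with
`rank(A_c) = 2n − 1`, every trajectory converges to `r_{c1}·v_r`, where
`r_{c1} = 1ₙᵀΨ⁻¹(Uᵈ(0) + ΦLΥ⁻¹Iᵐ(0)) / 1ₙᵀΨ⁻¹(Y⁻¹+R)Υ1ₙ`; in particular the current
vector converges to `r_{c1}·Υ1ₙ`, i.e. all nodes attain the same steady current ratio. -/
theorem closedLoop_steady_state_shunt
    (n : ℕ) (hn : 0 < n)
    (Y : Matrix (Fin n) (Fin n) ℝ) (hYunit : IsUnit Y.det)
    (L : Matrix (Fin n) (Fin n) ℝ) (hLsym : L.IsSymm)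
    (hL1 : L *ᵥ (fun _ => (1 : ℝ)) = 0)
    (d r υ φv ψv : Fin n → ℝ)
    (hd : ∀ i, d i ≠ 0) (hr : ∀ i, 0 < r i) (hυ : ∀ i, 0 < υ i) (hψ : ∀ i, 0 < ψv i)
    (D R Υ Φ Ψ : Matrix (Fin n) (Fin n) ℝ)
    (hD : D = Matrix.diagonal d) (hR : R = Matrix.diagonal r)
    (hΥ : Υ = Matrix.diagonal υ) (hΦ : Φ = Matrix.diagonal φv)
    (hΨ : Ψ = Matrix.diagonal ψv)
    (A_c : Matrix (Fin n ⊕ Fin n) (Fin n ⊕ Fin n) ℝ)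
    (hA : A_c = Matrix.fromBlocks
      (-(D⁻¹ * (1 + Y * R))) (D⁻¹ * Y)
      (-(Ψ * L * Υ⁻¹) + Φ * L * Υ⁻¹ * D⁻¹ * (1 + Y * R)) (-(Φ * L * Υ⁻¹ * D⁻¹ * Y)))
    (v_r v_l : Fin n ⊕ Fin n → ℝ)
    (hvr : v_r = Sum.elim (Υ *ᵥ (fun _ => (1 : ℝ)))
      (((Y⁻¹ + R) * Υ) *ᵥ (fun _ => (1 : ℝ))))
    (hvl : v_l = Sum.elim ((Υ⁻¹ * L * Φ * Ψ⁻¹) *ᵥ (fun _ => (1 : ℝ)))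
      (Ψ⁻¹ *ᵥ (fun _ => (1 : ℝ))))
    (hsemi : IsSemistable A_c)
    (hrank : A_c.rank = 2 * n - 1)
    (hvlvr : v_l ⬝ᵥ v_r ≠ 0) :
    ∀ z₀ : Fin n ⊕ Fin n → ℝ,
      Tendsto (fun t : ℝ => NormedSpace.exp (t • A_c) *ᵥ z₀) atTop
        (𝓝 ((((fun _ => (1 : ℝ)) ⬝ᵥ
              (Ψ⁻¹ *ᵥ ((fun i => z₀ (Sum.inr i)) +
                (Φ * L * Υ⁻¹) *ᵥ (fun i => z₀ (Sum.inl i))))) /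
            ((fun _ => (1 : ℝ)) ⬝ᵥ
              (Ψ⁻¹ *ᵥ (((Y⁻¹ + R) * Υ) *ᵥ (fun _ => (1 : ℝ)))))) • v_r)) := by
  obtain rfl : A_c = closedLoop D R Υ Φ Ψ Y L := hA
  subst hΥ hΨ hvr
  exact closedLoop_steady_state_shunt_general hYunit (isUnit_det_diagonal_of_pos hυ)
    (isUnit_det_diagonal_of_pos hψ) hL1 (by rw [← mulVec_transpose, hLsym]; exact hL1) hsemi
    (by rw [hrank, Fintype.card_sum, Fintype.card_fin]; omega)
end
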